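/- Let n = qp^k with p, q distinct odd primes and k ≥ 2, and let n' = np. Suppose U_n = ⟨x⟩ × ⟨y⟩ × ⟨z⟩ is an internal direct product where ord_{p^k}(x) is divisible by p but ord_{p^k}(y) and ord_{p^k}(z) are not. Then there exist lifts x', y', z' ∈ U_{n'} (elements reducing to x, y, z mod n) with ord_{n'}(y') = ord_n(y), ord_{n'}(z') = ord_n(z), ord_{n'}(x') = p·ord_n(x), and U_{n'} = ⟨x'⟩ × ⟨y'⟩ × ⟨z'⟩. -/

import Mathlib

/-- `G` is the internal direct product of the cyclic subgroups generated by `x`, `y`, `z`: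
the multiplication map from the product of the three subgroups is a bijection onto `G`. -/
def IsDirectProd3 {G : Type*} [Group G] (x y z : G) : Prop :=
  Function.Bijective
    (fun p : (Subgroup.zpowers x) × (Subgroup.zpowers y) × (Subgroup.zpowers z) =>
      (p.1 : G) * (p.2.1 : G) * (p.2.2 : G))

/-!
Write `n = q * p ^ k`. The kernel of `U_{np} → U_n` has exponent `p`, and for odd `p` and `k ≥ 2`
each of its elements is a `p`-th power, since `(1 + (n / p) * c) ^ p ≡ 1 + n * c (mod np)`. Such a
kernel consists of non-generators: if a subgroup `H` surjects onto `U_n`, then any kernel element is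
`w ^ p` with `w = h * e`, `h ∈ H`, `e` in the kernel, hence equals `h ^ p ∈ H`. So any lifts of `x`,
`y`, `z` generate `U_{np}`, and once those of `y` and `z` keep their orders, comparing cardinalities
forces the product to be direct and the order of the lift of `x` to be `p * ord x`.

An element `g` whose order `m` modulo `p ^ k` is prime to `p` has a lift of the same order. If
`p ∤ ord g`, raise any lift to a power `c` with `c ≡ 1 (mod ord g)` and `p ∣ c`. If `p ∣ ord g`,
then `m * p ∣ ord g` and any lift `u` works: `u ^ (m * p)` is `1` modulo `p ^ (k + 1)`, so
`u ^ ord g` is `1` modulo both `p ^ (k + 1)` and `n`, hence modulo `np`.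
-/

section DirectProduct

variable {G : Type*} [CommGroup G] {x y z : G}

lemma surjective_mul_zpowers_iff :
    Function.Surjective
        (fun t : Subgroup.zpowers x × Subgroup.zpowers y × Subgroup.zpowers z =>
          (t.1 : G) * (t.2.1 : G) * (t.2.2 : G)) ↔
      Subgroup.zpowers x ⊔ Subgroup.zpowers y ⊔ Subgroup.zpowers z = ⊤ := by
  simp only [Function.Surjective, Prod.exists, Subgroup.eq_top_iff', Subgroup.mem_sup,
    Subtype.exists, exists_prop]
  refine forall_congr' fun g => ⟨?_, ?_⟩
  · rintro ⟨a, ha, b, hb, c, hc, rfl⟩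
    exact ⟨a * b, ⟨a, ha, b, hb, rfl⟩, c, hc, rfl⟩
  · rintro ⟨_, ⟨a, ha, b, hb, rfl⟩, c, hc, rfl⟩
    exact ⟨a, ha, b, hb, c, hc, rfl⟩

lemma IsDirectProd3.sup_zpowers_eq_top (h : IsDirectProd3 x y z) :
    Subgroup.zpowers x ⊔ Subgroup.zpowers y ⊔ Subgroup.zpowers z = ⊤ :=
  surjective_mul_zpowers_iff.1 h.surjective

lemma card_zpowers_prod_zpowers_prod_zpowers :
    Nat.card (Subgroup.zpowers x × Subgroup.zpowers y × Subgroup.zpowers z) =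
      orderOf x * orderOf y * orderOf z := by
  simp only [Nat.card_prod, Nat.card_zpowers, mul_assoc]

lemma IsDirectProd3.card_eq (h : IsDirectProd3 x y z) :
    Nat.card G = orderOf x * orderOf y * orderOf z := by
  rw [← Nat.card_eq_of_bijective _ h, card_zpowers_prod_zpowers_prod_zpowers]

lemma isDirectProd3_of_sup_zpowers_eq_top [Finite G]
    (htop : Subgroup.zpowers x ⊔ Subgroup.zpowers y ⊔ Subgroup.zpowers z = ⊤)
    (hcard : orderOf x * orderOf y * orderOf z ≤ Nat.card G) : IsDirectProd3 x y z :=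
  (surjective_mul_zpowers_iff.2 htop).bijective_of_nat_card_le
    (card_zpowers_prod_zpowers_prod_zpowers.trans_le hcard)

end DirectProduct

section Lifting

variable {G G' A : Type*} [CommGroup G] [CommGroup G'] [CommGroup A] {π : G' →* G} {p : ℕ}

lemma eq_top_of_map_eq_top_of_ker_le (hker : π.ker ≤ (powMonoidHom p).ker)
    (hrange : π.ker ≤ (powMonoidHom p).range) {H : Subgroup G'}
    (hH : H.map π = ⊤) : H = ⊤ := by
  have hpow : ∀ e ∈ π.ker, e ^ p = 1 := fun _ he => hker he
  have hsup : H ⊔ π.ker = ⊤ := by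
    rw [← Subgroup.comap_map_eq, hH, Subgroup.comap_top]
  suffices π.ker ≤ H by rwa [sup_eq_left.2 this] at hsup
  intro e he
  obtain ⟨w, rfl⟩ := hrange he
  obtain ⟨h, hh, e', he', rfl⟩ := Subgroup.mem_sup.1 (hsup ▸ Subgroup.mem_top w)
  rw [powMonoidHom_apply, mul_pow, hpow e' he', mul_one]
  exact H.pow_mem hh p

lemma orderOf_dvd_mul_orderOf_map (hker : π.ker ≤ (powMonoidHom p).ker) (u : G') :
    orderOf u ∣ p * orderOf (π u) := by
  have hmem : u ^ orderOf (π u) ∈ π.ker := by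
    rw [MonoidHom.mem_ker, map_pow, pow_orderOf_eq_one]
  rw [mul_comm]
  exact orderOf_dvd_of_pow_eq_one ((pow_mul u _ p).trans (hker hmem))

lemma IsDirectProd3.of_lift [Finite G'] (hker : π.ker ≤ (powMonoidHom p).ker)
    (hrange : π.ker ≤ (powMonoidHom p).range) (hcard : Nat.card G' = p * Nat.card G)
    {x y z : G'} (h : IsDirectProd3 (π x) (π y) (π z))
    (hy : orderOf y = orderOf (π y)) (hz : orderOf z = orderOf (π z)) :
    orderOf x = p * orderOf (π x) ∧ IsDirectProd3 x y z := by
  have hcard' : Nat.card G' = p * orderOf (π x) * orderOf y * orderOf z := by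
    rw [hcard, h.card_eq, hy, hz]
    ring
  have htop : Subgroup.zpowers x ⊔ Subgroup.zpowers y ⊔ Subgroup.zpowers z = ⊤ :=
    eq_top_of_map_eq_top_of_ker_le hker hrange (by
      simpa only [Subgroup.map_sup, MonoidHom.map_zpowers] using h.sup_zpowers_eq_top)
  have hpos : 0 < p * orderOf (π x) := by
    have := hcard' ▸ (Nat.card_pos : 0 < Nat.card G')
    exact Nat.pos_of_mul_pos_right (Nat.pos_of_mul_pos_right this)
  have hle : orderOf x ≤ p * orderOf (π x) :=
    Nat.le_of_dvd hpos (orderOf_dvd_mul_orderOf_map hker x)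
  have hxyz : IsDirectProd3 x y z :=
    isDirectProd3_of_sup_zpowers_eq_top htop (by rw [hcard']; gcongr)
  refine ⟨?_, hxyz⟩
  have heq := hxyz.card_eq.symm.trans hcard'
  exact Nat.eq_of_mul_eq_mul_right (orderOf_pos y) (Nat.eq_of_mul_eq_mul_right (orderOf_pos z) heq)

lemma exists_lift_orderOf_eq_of_coprime (hπ : Function.Surjective π)
    (hker : π.ker ≤ (powMonoidHom p).ker) {g : G} (hg : (orderOf g).Coprime p) :
    ∃ g', π g' = g ∧ orderOf g' = orderOf g := by
  obtain ⟨w, rfl⟩ := hπ g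
  obtain ⟨c, hc_one, hc_zero⟩ := Nat.chineseRemainder hg 1 0
  have hlift : π (w ^ c) = π w := by
    simpa only [map_pow, pow_one] using pow_eq_pow_iff_modEq.2 hc_one
  refine ⟨w ^ c, hlift, Nat.dvd_antisymm (orderOf_dvd_of_pow_eq_one ?_) ?_⟩
  · rw [← pow_mul, ← orderOf_dvd_iff_pow_eq_one]
    exact (orderOf_dvd_mul_orderOf_map hker w).trans
      (mul_dvd_mul_right (Nat.modEq_zero_iff_dvd.1 hc_zero) _)
  · rw [← hlift]
    exact orderOf_map_dvd π _

lemma orderOf_eq_orderOf_map_of_dvd (hp : p.Prime) {f : G →* A}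
    (h : ∀ u, f (π u) = 1 → π u ^ p = 1 → u ^ p = 1) {u : G'}
    (hpu : p ∣ orderOf (π u)) (hfu : ¬ p ∣ orderOf (f (π u))) :
    orderOf u = orderOf (π u) := by
  refine Nat.dvd_antisymm (orderOf_dvd_of_pow_eq_one ?_) (orderOf_map_dvd π u)
  obtain ⟨r, hr⟩ : orderOf (f (π u)) * p ∣ orderOf (π u) :=
    ((Nat.Prime.coprime_iff_not_dvd hp).2 hfu).symm.mul_dvd_of_dvd_of_dvd
      (orderOf_map_dvd f (π u)) hpu
  have hr' : orderOf (π u) = orderOf (f (π u)) * r * p := by rw [hr]; ring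
  rw [hr', pow_mul]
  apply h
  · rw [map_pow, map_pow, pow_mul, pow_orderOf_eq_one, one_pow]
  · rw [map_pow, ← pow_mul, ← hr', pow_orderOf_eq_one]

lemma ker_le_ker_powMonoidHom {f : G →* A} (h : ∀ u, f (π u) = 1 → π u ^ p = 1 → u ^ p = 1) :
    π.ker ≤ (powMonoidHom p).ker := by
  intro u hu
  rw [MonoidHom.mem_ker] at hu
  exact h u (by rw [hu, map_one]) (by rw [hu, one_pow])

lemma exists_lift_orderOf_eq (hp : p.Prime) (hπ : Function.Surjective π) {f : G →* A}
    (h : ∀ u, f (π u) = 1 → π u ^ p = 1 → u ^ p = 1) {g : G} (hg : ¬ p ∣ orderOf (f g)) :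
    ∃ g', π g' = g ∧ orderOf g' = orderOf g := by
  by_cases hpg : p ∣ orderOf g
  · obtain ⟨u, rfl⟩ := hπ g
    exact ⟨u, rfl, orderOf_eq_orderOf_map_of_dvd hp h hpg hg⟩
  · exact exists_lift_orderOf_eq_of_coprime hπ (ker_le_ker_powMonoidHom h)
      ((Nat.Prime.coprime_iff_not_dvd hp).2 hpg).symm

end Lifting

section UnitsModN

lemma mul_dvd_pow_sub_one {R : Type*} [CommRing R] {a r : R} {p : ℕ} (hpr : (p : R) ∣ r)
    (hr : r ∣ a - 1) : r * p ∣ a ^ p - 1 := by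
  have hsum : (p : R) ∣ ∑ i ∈ Finset.range p, a ^ i * 1 ^ (p - 1 - i) :=
    (dvd_geom_sum₂_iff_of_dvd_sub (hpr.trans hr)).2 (dvd_mul_right _ _)
  rw [← one_pow p, ← geom_sum₂_mul, mul_comm]
  exact mul_dvd_mul hsum hr

lemma unitsMap_eq_one_iff_dvd_sub_one {n m : ℕ} (h : n ∣ m) (u : (ZMod m)ˣ) :
    ZMod.unitsMap h u = 1 ↔ (n : ZMod m) ∣ u - 1 := by
  have hcast : ZMod.unitsMap h u = 1 ↔ ZMod.castHom h (ZMod n) (u - 1) = 0 := by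
    rw [map_sub, map_one, sub_eq_zero, Units.ext_iff, Units.val_one]
    rfl
  obtain ⟨a, ha⟩ := ZMod.intCast_surjective ((u : ZMod m) - 1)
  rw [hcast, ← ha, map_intCast, ZMod.intCast_zmod_eq_zero_iff_dvd]
  constructor
  · rintro ⟨b, rfl⟩
    exact ⟨b, by push_cast; rfl⟩
  · intro hdvd
    simpa [ZMod.intCast_zmod_eq_zero_iff_dvd] using map_dvd (ZMod.castHom h (ZMod n)) hdvd

lemma pow_eq_one_of_unitsMap_pow_eq_one {p q k : ℕ} (hqp : q.Coprime p) (hk : k ≠ 0)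
    (u : (ZMod (q * p ^ k * p))ˣ)
    (hu : ZMod.unitsMap (dvd_mul_left (p ^ k) q) (ZMod.unitsMap (dvd_mul_right _ p) u) = 1)
    (hup : ZMod.unitsMap (dvd_mul_right (q * p ^ k) p) u ^ p = 1) : u ^ p = 1 := by
  rw [← MonoidHom.comp_apply, ZMod.unitsMap_comp, unitsMap_eq_one_iff_dvd_sub_one] at hu
  rw [← map_pow, unitsMap_eq_one_iff_dvd_sub_one] at hup
  push_cast at hu hup
  have hcop : IsCoprime (q : ZMod (q * p ^ k * p)) (p ^ k * p) := by
    exact_mod_cast ((hqp.pow_right k).mul_right hqp).cast (R := ZMod (q * p ^ k * p))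
  have hdvd := hcop.mul_dvd ((dvd_mul_right _ _).trans hup)
    (mul_dvd_pow_sub_one (dvd_pow_self _ hk) hu)
  have hzero : (q : ZMod (q * p ^ k * p)) * (p ^ k * p) = 0 := by
    rw [← mul_assoc]
    exact_mod_cast ZMod.natCast_self (q * p ^ k * p)
  rw [hzero, zero_dvd_iff, sub_eq_zero] at hdvd
  exact Units.ext hdvd

lemma ker_unitsMap_le_range_powMonoidHom {p n : ℕ} (hp : p.Prime) (hpo : Odd p)
    (hn : p ^ 2 ∣ n) :
    (ZMod.unitsMap (dvd_mul_right n p)).ker ≤ (powMonoidHom p).range := by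
  intro u hu
  obtain ⟨c, hc⟩ := (unitsMap_eq_one_iff_dvd_sub_one _ u).1 hu
  obtain ⟨m, rfl⟩ := (dvd_pow_self p two_ne_zero).trans hn
  have hpm : p ∣ m := Nat.dvd_of_mul_dvd_mul_left hp.pos (by rwa [← sq])
  have hp3 : 3 ≤ p := hp.two_le.lt_of_ne (by rintro rfl; contradiction)
  have hdvd : p * m * p ∣ m ^ p := calc
    p * m * p = p ^ 2 * m := by ring
    _ ∣ m ^ 2 * m := mul_dvd_mul_right (pow_dvd_pow_of_dvd hpm 2) m
    _ = m ^ 3 := by ring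
    _ ∣ m ^ p := pow_dvd_pow m hp3
  obtain ⟨d, hd⟩ := ZMod.exists_one_add_mul_pow_prime_eq (R := ZMod (p * m * p))
    (u := m) (v := p) hp (by exact_mod_cast Nat.cast_dvd_cast hpm)
    (by exact_mod_cast Nat.cast_dvd_cast hdvd) c
  have hzero : (p * m * p : ZMod (p * m * p)) = 0 := by
    exact_mod_cast ZMod.natCast_self (p * m * p)
  have hpow : (1 + m * c) ^ p = (u : ZMod (p * m * p)) := by
    push_cast at hc
    linear_combination hd + d * hzero - hc
  obtain ⟨w, hw⟩ : IsUnit (1 + m * c) := (isUnit_pow_iff hp.ne_zero).1 (hpow ▸ u.isUnit)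
  exact ⟨w, Units.ext (by rw [powMonoidHom_apply, Units.val_pow_eq_pow_val, hw, hpow])⟩

lemma card_units_zmod_mul_prime {p n : ℕ} [NeZero n] (hp : p.Prime) (hn : p ∣ n) :
    Nat.card (ZMod (n * p))ˣ = p * Nat.card (ZMod n)ˣ := by
  have : NeZero p := ⟨hp.ne_zero⟩
  simp only [Nat.card_eq_fintype_card, ZMod.card_units_eq_totient]
  rw [mul_comm n, Nat.totient_mul_of_prime_of_dvd hp hn]

end UnitsModN

theorem stmt16_general {p q k : ℕ} (hp : p.Prime) (hpo : Odd p) (hqp : q.Coprime p) (hk : 2 ≤ k)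
    {x y z : (ZMod (q * p ^ k))ˣ} (hdp : IsDirectProd3 x y z)
    (hy : ¬ p ∣ orderOf (ZMod.unitsMap (dvd_mul_left (p ^ k) q) y))
    (hz : ¬ p ∣ orderOf (ZMod.unitsMap (dvd_mul_left (p ^ k) q) z)) :
    ∃ x' y' z' : (ZMod (q * p ^ k * p))ˣ,
      ZMod.unitsMap (dvd_mul_right (q * p ^ k) p) x' = x ∧
      ZMod.unitsMap (dvd_mul_right (q * p ^ k) p) y' = y ∧
      ZMod.unitsMap (dvd_mul_right (q * p ^ k) p) z' = z ∧
      orderOf x' = p * orderOf x ∧ orderOf y' = orderOf y ∧ orderOf z' = orderOf z ∧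
      IsDirectProd3 x' y' z' := by
  have hq : q ≠ 0 := by
    rintro rfl
    exact hp.ne_one ((Nat.coprime_zero_left p).1 hqp)
  have : NeZero p := ⟨hp.ne_zero⟩
  have : NeZero q := ⟨hq⟩
  have hpow := pow_eq_one_of_unitsMap_pow_eq_one hqp (two_pos.trans_le hk).ne'
  have hdvd : p ^ 2 ∣ q * p ^ k := (pow_dvd_pow p hk).mul_left q
  have hsurj := ZMod.unitsMap_surjective (dvd_mul_right (q * p ^ k) p)
  obtain ⟨x', rfl⟩ := hsurj x
  obtain ⟨y', rfl, hy'⟩ := exists_lift_orderOf_eq hp hsurj hpow hy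
  obtain ⟨z', rfl, hz'⟩ := exists_lift_orderOf_eq hp hsurj hpow hz
  obtain ⟨hx', hdp'⟩ := IsDirectProd3.of_lift (ker_le_ker_powMonoidHom hpow)
    (ker_unitsMap_le_range_powMonoidHom hp hpo hdvd)
    (card_units_zmod_mul_prime hp ((dvd_pow_self p two_ne_zero).trans hdvd)) hdp hy' hz'
  exact ⟨x', y', z', rfl, rfl, rfl, hx', hy', hz', hdp'⟩

theorem stmt16 (p q k : ℕ) (hp : p.Prime) (hq : q.Prime) (hpo : Odd p) (hqo : Odd q)
    (hpq : p ≠ q) (hk : 2 ≤ k)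
    (x y z : (ZMod (q * p ^ k))ˣ) (hdp : IsDirectProd3 x y z)
    (hx : p ∣ orderOf
      (Units.map (ZMod.castHom (dvd_mul_left (p ^ k) q) (ZMod (p ^ k))).toMonoidHom x))
    (hy : ¬ p ∣ orderOf
      (Units.map (ZMod.castHom (dvd_mul_left (p ^ k) q) (ZMod (p ^ k))).toMonoidHom y))
    (hz : ¬ p ∣ orderOf
      (Units.map (ZMod.castHom (dvd_mul_left (p ^ k) q) (ZMod (p ^ k))).toMonoidHom z)) :
    ∃ x' y' z' : (ZMod (q * p ^ k * p))ˣ,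
      Units.map (ZMod.castHom (dvd_mul_right (q * p ^ k) p) (ZMod (q * p ^ k))).toMonoidHom x' = x ∧
      Units.map (ZMod.castHom (dvd_mul_right (q * p ^ k) p) (ZMod (q * p ^ k))).toMonoidHom y' = y ∧
      Units.map (ZMod.castHom (dvd_mul_right (q * p ^ k) p) (ZMod (q * p ^ k))).toMonoidHom z' = z ∧
      orderOf x' = p * orderOf x ∧ orderOf y' = orderOf y ∧ orderOf z' = orderOf z ∧
      IsDirectProd3 x' y' z' := by
  exact stmt16_general hp hpo ((Nat.coprime_primes hq hp).2 hpq.symm) hk hdp hy hz
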